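/- arXiv:2309.17357 — 2 statements merged into one kernel-verified Lean document; each statement's English description precedes it below -/
import Mathlib

section
/- Let μ be an absolutely continuous Borel probability measure on Ω with μ(∂Ω) = 0, let Z be a real-valued function on the Borel probability measures on Ω that is bounded below, and let τ > 0. Then the infimum over Borel measurable maps T : Ω → Ω of Z(T_♯μ) + (1/(2τ)) W2²(T_♯μ, μ) equals the infimum over Borel measurable maps T : Ω → Ω of Z(T_♯μ) + (1/(2τ)) ∫_Ω ‖T(x) − x‖² dμ(x); moreover, any minimizer T of the second problem is an optimal transport map from μ to T_♯μ, i.e. ∫_Ω ‖T(x) − x‖² dμ(x) = W2²(μ, T_♯μ). -/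
open MeasureTheory

/-- Squared Wasserstein distance between Borel probability measures on a subset `Ω` of
Euclidean space: the infimum of the quadratic transport cost over all couplings. -/
noncomputable def W2sq {d : ℕ} {Ω : Set (EuclideanSpace ℝ (Fin d))}
    (α β : Measure Ω) : ℝ :=
  sInf { c : ℝ | ∃ γ : Measure (Ω × Ω), IsProbabilityMeasure γ ∧
    γ.map Prod.fst = α ∧ γ.map Prod.snd = β ∧
    c = ∫ p, ‖(p.1 : EuclideanSpace ℝ (Fin d)) - (p.2 : EuclideanSpace ℝ (Fin d))‖ ^ 2 ∂γ }

/-- The quadratic transport cost of a map `T : Ω → Ω` with respect to `μ`. -/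
noncomputable def transportCost {d : ℕ} {Ω : Set (EuclideanSpace ℝ (Fin d))}
    (T : Ω → Ω) (μ : Measure Ω) : ℝ :=
  ∫ x, ‖(T x : EuclideanSpace ℝ (Fin d)) - (x : EuclideanSpace ℝ (Fin d))‖ ^ 2 ∂μ

open Set Filter Topology ProbabilityTheory in
lemma aux_cdf_uniform (m : Measure ℝ) [IsProbabilityMeasure m] [NullSingletonClass m] :
    ∃ G : ℝ → unitInterval, Measurable G ∧ m.map G = volume := by
  have hcont : Continuous (cdf m) := by
    rw [continuous_iff_continuousAt]
    intro x
    have h1 : (cdf m).measure {x} = 0 := by rw [measure_cdf]; simp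
    rw [StieltjesFunction.measure_singleton, ENNReal.ofReal_eq_zero] at h1
    rw [(cdf m).mono.continuousAt_iff_leftLim_eq_rightLim, (cdf m).rightLim_eq]
    exact le_antisymm ((cdf m).mono.leftLim_le le_rfl) (by linarith)
  let G : ℝ → unitInterval := fun x => ⟨cdf m x, cdf_nonneg m x, cdf_le_one m x⟩
  have hG : Measurable G := (hcont.measurable).subtype_mk
  have ivt : ∀ t : ℝ, 0 < t → t < 1 → ∃ x, cdf m x = t := by
    intro t h0 h1
    obtain ⟨a, ha⟩ := ((tendsto_cdf_atBot m).eventually (gt_mem_nhds h0)).exists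
    obtain ⟨b, hb⟩ := ((tendsto_cdf_atTop m).eventually (lt_mem_nhds h1)).exists
    exact mem_range_of_exists_le_of_exists_ge hcont ⟨a, ha.le⟩ ⟨b, hb.le⟩
  refine ⟨G, hG, ?_⟩
  have : IsProbabilityMeasure (m.map G) := Measure.isProbabilityMeasure_map hG.aemeasurable
  refine Measure.ext_of_Iic _ _ fun t => ?_
  rw [Measure.map_apply hG measurableSet_Iic, unitInterval.volume_Iic]
  have hpre : G ⁻¹' Iic t = {x | cdf m x ≤ t} := rfl
  rw [hpre]
  rcases eq_or_lt_of_le t.2.2 with h1 | h1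
  · have : {x | cdf m x ≤ t} = univ := by
      ext x; simp [h1, cdf_le_one m x]
    rw [this, h1]; simp
  · apply le_antisymm
    · have key : ∀ s : ℝ, t < s → s < 1 → m {x | cdf m x ≤ t} ≤ ENNReal.ofReal s := by
        intro s hs hs1
        obtain ⟨x, hx⟩ := ivt s (t.2.1.trans_lt hs) hs1
        rw [← hx, ofReal_cdf]
        apply measure_mono
        intro y hy
        by_contra hxy
        have := (cdf m).mono (not_le.mp hxy).le
        have hy' : cdf m y ≤ t := hy
        linarith
      have hl : Tendsto (fun s : ℝ => ENNReal.ofReal s) (𝓝[>] (t : ℝ)) (𝓝 (ENNReal.ofReal t)) :=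
        (ENNReal.continuous_ofReal.tendsto _).mono_left nhdsWithin_le_nhds
      refine ge_of_tendsto hl ?_
      filter_upwards [Ioo_mem_nhdsGT h1] with s hs using key s hs.1 hs.2
    · rcases eq_or_lt_of_le t.2.1 with h0 | h0
      · rw [← h0]; simp
      · obtain ⟨x, hx⟩ := ivt t h0 h1
        conv_lhs => rw [← hx, ofReal_cdf]
        apply measure_mono
        intro y hy
        exact ((cdf m).mono hy).trans hx.le

lemma aux_exists_map {X Y : Type*} [MeasurableSpace X] [StandardBorelSpace X]
    [MeasurableSpace Y] [StandardBorelSpace Y] [Nonempty Y]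
    (a : Measure X) [IsFiniteMeasure a] [NullSingletonClass a] (b : Measure Y)
    (hab : a Set.univ = b Set.univ) :
    ∃ f : X → Y, Measurable f ∧ a.map f = b := by
  by_cases h0 : a Set.univ = 0
  · refine ⟨fun _ => Classical.arbitrary Y, measurable_const, ?_⟩
    have hb0 : b Set.univ = 0 := hab ▸ h0
    rw [Measure.measure_univ_eq_zero.mp h0, Measure.measure_univ_eq_zero.mp hb0]
    simp
  · have ht : a Set.univ ≠ ⊤ := measure_ne_top _ _
    let c := a Set.univ
    let e := embeddingReal X
    have he := measurableEmbedding_embeddingReal X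
    let m : Measure ℝ := (c⁻¹ • a).map e
    have hp1 : IsProbabilityMeasure (c⁻¹ • a) := ⟨by simp [c, ENNReal.inv_mul_cancel h0 ht]⟩
    have hp2 : IsProbabilityMeasure (c⁻¹ • b) := ⟨by simp [c, ← hab, ENNReal.inv_mul_cancel h0 ht]⟩
    have hp3 : IsProbabilityMeasure m := Measure.isProbabilityMeasure_map he.measurable.aemeasurable
    have hn : NullSingletonClass m := ⟨fun x => by
      change ((c⁻¹ • a).map e) {x} = 0
      rw [Measure.map_apply he.measurable (measurableSet_singleton x)]
      have : (e ⁻¹' {x}).Subsingleton := Set.subsingleton_singleton.preimage he.injective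
      rw [Measure.smul_apply, this.measure_zero a, smul_zero]⟩
    obtain ⟨G, hG, hGm⟩ := aux_cdf_uniform m
    obtain ⟨f, hf, hfm⟩ := Measure.exists_measurable_map_eq (c⁻¹ • b)
    refine ⟨f ∘ G ∘ e, hf.comp (hG.comp he.measurable), ?_⟩
    have h1 : (c⁻¹ • a).map (f ∘ G ∘ e) = c⁻¹ • b := by
      rw [← Measure.map_map hf (hG.comp he.measurable), ← Measure.map_map hG he.measurable]
      change Measure.map f (Measure.map G m) = _
      rw [hGm, hfm]
    rw [Measure.map_smul] at h1
    have h2 := congrArg (fun x => c • x) h1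
    simpa [smul_smul, ENNReal.mul_inv_cancel h0 ht, c] using h2

lemma aux_split {X : Type*} [MeasurableSpace X] (μ : Measure X) (n : X → ℕ) (hn : Measurable n)
    (s : Set X) (hs : MeasurableSet s) : μ s = ∑' i, μ (s ∩ n ⁻¹' {i}) := by
  rw [← measure_iUnion]
  · congr 1; ext x; simp
  · intro i j hij
    refine Set.disjoint_left.mpr ?_
    rintro x ⟨_, h1⟩ ⟨_, h2⟩
    exact hij (h1.symm.trans h2)
  · exact fun i => hs.inter (hn (measurableSet_singleton i))

lemma aux_main {X : Type*} [MetricSpace X] [CompactSpace X] [MeasurableSpace X] [BorelSpace X]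
    (μ : Measure X) [IsProbabilityMeasure μ] [NullSingletonClass μ]
    (γ : Measure (X × X)) [IsProbabilityMeasure γ] (hγ : γ.map Prod.fst = μ)
    (k : X × X → ℝ) (hk : Continuous k) (ε : ℝ) (hε : 0 < ε) :
    ∃ S : X → X, Measurable S ∧ μ.map S = γ.map Prod.snd ∧
      ∫ x, k (x, S x) ∂μ ≤ ∫ p, k p ∂γ + ε := by
  classical
  have : Nonempty X := nonempty_of_isProbabilityMeasure μ
  have huc := CompactSpace.uniformContinuous_of_continuous hk
  obtain ⟨δ, hδ, hd⟩ := Metric.uniformContinuous_iff.mp huc (ε / 2) (by positivity)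
  let D := TopologicalSpace.denseSeq X
  have hex : ∀ x, ∃ i, dist x (D i) < δ := fun x =>
    (TopologicalSpace.denseRange_denseSeq X).exists_dist_lt x hδ
  let n : X → ℕ := fun x => Nat.find (hex x)
  have hn : Measurable n := measurable_find hex fun i =>
    measurableSet_lt (measurable_id.dist measurable_const) measurable_const
  have hnd : ∀ x, dist x (D (n x)) < δ := fun x => Nat.find_spec (hex x)
  have hns : ∀ i, MeasurableSet (n ⁻¹' {i}) := fun i => hn (measurableSet_singleton i)
  have hS : ∀ i, ∃ f : X → X, Measurable f ∧
      (μ.restrict (n ⁻¹' {i})).map f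
        = (γ.restrict (Prod.fst ⁻¹' (n ⁻¹' {i}))).map Prod.snd := by
    intro i
    apply aux_exists_map
    rw [Measure.map_apply measurable_snd MeasurableSet.univ]
    simp only [Set.preimage_univ, Measure.restrict_apply_univ]
    rw [← hγ, Measure.map_apply measurable_fst (hns i)]
  choose f hf hfm using hS
  let S : X → X := fun x => f (n x) x
  have hSm : Measurable S := by
    have : Measurable (fun p : ℕ × X => f p.1 p.2) :=
      measurable_from_prod_countable_right fun i => hf i
    exact this.comp (hn.prodMk measurable_id)
  have m2 : Measurable (fun p : X × X => (n p.1, p.2)) :=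
      (hn.comp measurable_fst).prodMk measurable_snd
  have hlaw : μ.map (fun x => (n x, S x)) = γ.map (fun p => (n p.1, p.2)) := by
    have m1 : Measurable (fun x => (n x, S x)) := hn.prodMk hSm
    ext B hB
    rw [Measure.map_apply m1 hB, Measure.map_apply m2 hB, aux_split μ n hn _ (m1 hB),
      aux_split γ (fun p => n p.1) (hn.comp measurable_fst) _ (m2 hB)]
    congr 1
    ext i
    have hBi : MeasurableSet ((fun y : X => (i, y)) ⁻¹' B) := measurable_prodMk_left hB
    have := congrArg (fun ν => ν ((fun y : X => (i, y)) ⁻¹' B)) (hfm i)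
    rw [Measure.map_apply (hf i) hBi, Measure.map_apply measurable_snd hBi,
      Measure.restrict_apply (hf i hBi), Measure.restrict_apply (measurable_snd hBi)] at this
    convert this using 2
    · ext x
      simp only [Set.mem_inter_iff, Set.mem_preimage, Set.mem_singleton_iff, S]
      constructor <;> rintro ⟨h1, h2⟩ <;> subst h2 <;> exact ⟨h1, rfl⟩
    · ext x
      simp only [Set.mem_inter_iff, Set.mem_preimage, Set.mem_singleton_iff]
      constructor <;> rintro ⟨h1, h2⟩ <;> subst h2 <;> exact ⟨h1, rfl⟩
  refine ⟨S, hSm, ?_, ?_⟩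
  · have := congrArg (fun ν => ν.map Prod.snd) hlaw
    rw [Measure.map_map measurable_snd (hn.prodMk hSm), Measure.map_map measurable_snd m2] at this
    exact this
  · obtain ⟨C, hC⟩ := (isCompact_range hk).isBounded.exists_norm_le
    have hC' : ∀ p, ‖k p‖ ≤ C := fun p => hC _ ⟨p, rfl⟩
    have hDm : Measurable D := measurable_from_nat
    have hint1 : Integrable (fun x => k (x, S x)) μ :=
      Integrable.of_bound (hk.measurable.comp
        (measurable_id.prodMk hSm)).aestronglyMeasurable C (ae_of_all _ fun x => hC' _)
    have hint2 : Integrable (fun x => k (D (n x), S x)) μ :=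
      Integrable.of_bound (hk.measurable.comp
        ((hDm.comp hn).prodMk hSm)).aestronglyMeasurable C (ae_of_all _ fun x => hC' _)
    have hint3 : Integrable (fun p : X × X => k (D (n p.1), p.2)) γ :=
      Integrable.of_bound (hk.measurable.comp
        ((hDm.comp (hn.comp measurable_fst)).prodMk measurable_snd)).aestronglyMeasurable C
        (ae_of_all _ fun x => hC' _)
    have hint4 : Integrable k γ :=
      Integrable.of_bound hk.measurable.aestronglyMeasurable C (ae_of_all _ fun x => hC' _)
    have hclose : ∀ x y, |k (x, y) - k (D (n x), y)| < ε / 2 := by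
      intro x y
      have h : dist (x, y) (D (n x), y) < δ := by
        rw [Prod.dist_eq]; simpa using hnd x
      simpa [Real.dist_eq] using hd h
    have e1 : ∫ x, k (x, S x) ∂μ ≤ ∫ x, (k (D (n x), S x) + ε / 2) ∂μ :=
      integral_mono hint1 (hint2.add (integrable_const _)) fun x => by
        have := abs_lt.mp (hclose x (S x)); simp only; linarith
    have e2 : ∫ p : X × X, k (D (n p.1), p.2) ∂γ ≤ ∫ p, (k p + ε / 2) ∂γ :=
      integral_mono hint3 (hint4.add (integrable_const _)) fun p => by
        have := abs_lt.mp (hclose p.1 p.2); simp only; linarith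
    rw [integral_add hint2 (integrable_const _)] at e1
    rw [integral_add hint4 (integrable_const _)] at e2
    simp only [integral_const, probReal_univ, smul_eq_mul, one_mul] at e1 e2
    have hg : Measurable (fun q : ℕ × X => k (D q.1, q.2)) :=
      hk.measurable.comp ((hDm.comp measurable_fst).prodMk measurable_snd)
    have e3 := congrArg (fun ν => ∫ q, k (D q.1, q.2) ∂ν) hlaw
    rw [integral_map (hn.prodMk hSm).aemeasurable hg.aestronglyMeasurable,
      integral_map m2.aemeasurable
        hg.aestronglyMeasurable] at e3
    simp only at e3
    linarith

lemma W2sq_nonneg {d : ℕ} {Ω : Set (EuclideanSpace ℝ (Fin d))} (α β : Measure Ω) :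
    0 ≤ W2sq α β := by
  apply Real.sInf_nonneg
  rintro c ⟨γ, -, -, -, rfl⟩
  exact integral_nonneg fun p => by positivity

lemma W2sq_comm_le {d : ℕ} {Ω : Set (EuclideanSpace ℝ (Fin d))} (α β : Measure Ω) :
    W2sq α β = W2sq β α := by
  have : ∀ α β : Measure Ω, { c : ℝ | ∃ γ : Measure (Ω × Ω), IsProbabilityMeasure γ ∧
    γ.map Prod.fst = α ∧ γ.map Prod.snd = β ∧
    c = ∫ p, ‖(p.1 : EuclideanSpace ℝ (Fin d)) - (p.2 : EuclideanSpace ℝ (Fin d))‖ ^ 2 ∂γ } ⊆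
    { c : ℝ | ∃ γ : Measure (Ω × Ω), IsProbabilityMeasure γ ∧
    γ.map Prod.fst = β ∧ γ.map Prod.snd = α ∧
    c = ∫ p, ‖(p.1 : EuclideanSpace ℝ (Fin d)) - (p.2 : EuclideanSpace ℝ (Fin d))‖ ^ 2 ∂γ } := by
    rintro α β c ⟨γ, hγ, h1, h2, rfl⟩
    refine ⟨γ.map Prod.swap, Measure.isProbabilityMeasure_map measurable_swap.aemeasurable,
      ?_, ?_, ?_⟩
    · rw [Measure.map_map measurable_fst measurable_swap]; exact h2
    · rw [Measure.map_map measurable_snd measurable_swap]; exact h1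
    · rw [integral_map measurable_swap.aemeasurable]
      · simp only [Prod.fst_swap, Prod.snd_swap]
        congr 1; ext p; rw [norm_sub_rev]
      · exact (by fun_prop : Continuous (fun p : Ω × Ω =>
          ‖(p.1 : EuclideanSpace ℝ (Fin d)) - (p.2 : EuclideanSpace ℝ (Fin d))‖ ^ 2)).measurable.aestronglyMeasurable
  unfold W2sq
  exact congrArg sInf (Set.Subset.antisymm (this α β) (this β α))

lemma transport_mem {d : ℕ} {Ω : Set (EuclideanSpace ℝ (Fin d))}
    (μ : Measure Ω) [IsProbabilityMeasure μ] (T : Ω → Ω) (hT : Measurable T) :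
    transportCost T μ ∈ { c : ℝ | ∃ γ : Measure (Ω × Ω), IsProbabilityMeasure γ ∧
    γ.map Prod.fst = μ ∧ γ.map Prod.snd = μ.map T ∧
    c = ∫ p, ‖(p.1 : EuclideanSpace ℝ (Fin d)) - (p.2 : EuclideanSpace ℝ (Fin d))‖ ^ 2 ∂γ } := by
  have hm : Measurable (fun x => (x, T x)) := measurable_id.prodMk hT
  refine ⟨μ.map (fun x => (x, T x)), Measure.isProbabilityMeasure_map hm.aemeasurable, ?_, ?_, ?_⟩
  · rw [Measure.map_map measurable_fst hm]; exact Measure.map_id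
  · rw [Measure.map_map measurable_snd hm]; rfl
  · rw [integral_map hm.aemeasurable]
    · unfold transportCost
      congr 1; ext p; rw [norm_sub_rev]
    · exact (by fun_prop : Continuous (fun p : Ω × Ω =>
          ‖(p.1 : EuclideanSpace ℝ (Fin d)) - (p.2 : EuclideanSpace ℝ (Fin d))‖ ^ 2)).measurable.aestronglyMeasurable

lemma W2sq_le_transport {d : ℕ} {Ω : Set (EuclideanSpace ℝ (Fin d))}
    (μ : Measure Ω) [IsProbabilityMeasure μ] (T : Ω → Ω) (hT : Measurable T) :
    W2sq μ (μ.map T) ≤ transportCost T μ := by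
  refine csInf_le ⟨0, ?_⟩ (transport_mem μ T hT)
  rintro c ⟨γ, -, -, -, rfl⟩
  exact integral_nonneg fun p => by positivity

lemma exists_transport_le {d : ℕ} {Ω : Set (EuclideanSpace ℝ (Fin d))} (hcomp : IsCompact Ω)
    (μ : Measure Ω) [IsProbabilityMeasure μ] [NullSingletonClass μ] (T : Ω → Ω)
    (hT : Measurable T) (ε : ℝ) (hε : 0 < ε) :
    ∃ S : Ω → Ω, Measurable S ∧ μ.map S = μ.map T ∧
      transportCost S μ ≤ W2sq μ (μ.map T) + ε := by
  have : CompactSpace Ω := isCompact_iff_compactSpace.mp hcomp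
  obtain ⟨c, ⟨γ, hγ, h1, h2, rfl⟩, hlt⟩ := exists_lt_of_csInf_lt ⟨_, transport_mem μ T hT⟩
    (show W2sq μ (μ.map T) < W2sq μ (μ.map T) + ε / 2 by linarith)
  obtain ⟨S, hS, hSm, hle⟩ := aux_main μ γ h1 (fun p : Ω × Ω =>
          ‖(p.1 : EuclideanSpace ℝ (Fin d)) - (p.2 : EuclideanSpace ℝ (Fin d))‖ ^ 2)
          (by fun_prop) (ε / 2) (by positivity)
  refine ⟨S, hS, hSm.trans h2, ?_⟩
  have : transportCost S μ = ∫ x, ‖(x : EuclideanSpace ℝ (Fin d)) - (S x)‖ ^ 2 ∂μ := by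
    unfold transportCost
    congr 1; ext p; rw [norm_sub_rev]
  rw [this]
  linarith

theorem stmt1 {d : ℕ} (hd : 1 ≤ d) (Ω : Set (EuclideanSpace ℝ (Fin d)))
    (hconv : Convex ℝ Ω) (hcomp : IsCompact Ω)
    (hfront : volume (frontier Ω) = 0)
    (μ : Measure Ω) (hμ : IsProbabilityMeasure μ)
    (hac : μ.map (Subtype.val : Ω → EuclideanSpace ℝ (Fin d)) ≪ volume)
    (hμfront : μ.map (Subtype.val : Ω → EuclideanSpace ℝ (Fin d)) (frontier Ω) = 0)
    (Z : Measure Ω → ℝ) (hZ : BddBelow (Set.range Z))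
    (τ : ℝ) (hτ : 0 < τ) :
    (sInf { c : ℝ | ∃ T : Ω → Ω, Measurable T ∧
        c = Z (μ.map T) + (1 / (2 * τ)) * W2sq (μ.map T) μ }
      = sInf { c : ℝ | ∃ T : Ω → Ω, Measurable T ∧
        c = Z (μ.map T) + (1 / (2 * τ)) * transportCost T μ })
    ∧ ∀ T : Ω → Ω, Measurable T →
        (∀ S : Ω → Ω, Measurable S →
          Z (μ.map T) + (1 / (2 * τ)) * transportCost T μ
            ≤ Z (μ.map S) + (1 / (2 * τ)) * transportCost S μ) →
        transportCost T μ = W2sq μ (μ.map T) := by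
  have : Nonempty (Fin d) := ⟨⟨0, hd⟩⟩
  have hat : NullSingletonClass μ := ⟨fun x => by
    have h := hac (measure_singleton (x : EuclideanSpace ℝ (Fin d)))
    rw [Measure.map_apply measurable_subtype_coe (measurableSet_singleton _)] at h
    exact measure_mono_null (by rintro y rfl; rfl) h⟩
  obtain ⟨b, hb⟩ := hZ
  have hb' : ∀ ν, b ≤ Z ν := fun ν => hb ⟨ν, rfl⟩
  have ht : 0 < 1 / (2 * τ) := by positivity
  have hnn : ∀ S : Ω → Ω, 0 ≤ transportCost S μ := fun S =>
    integral_nonneg fun p => by positivity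
  have key : ∀ T : Ω → Ω, Measurable T → ∀ ε : ℝ, 0 < ε → ∃ S : Ω → Ω, Measurable S ∧
      μ.map S = μ.map T ∧ (1 / (2 * τ)) * transportCost S μ
        ≤ (1 / (2 * τ)) * W2sq μ (μ.map T) + ε := by
    intro T hT ε hε
    obtain ⟨S, hS, hSm, hle⟩ := exists_transport_le hcomp μ T hT (ε / (1 / (2 * τ)))
      (by positivity)
    refine ⟨S, hS, hSm, ?_⟩
    have := mul_le_mul_of_nonneg_left hle ht.le
    rwa [mul_add, mul_div_cancel₀ _ ht.ne'] at this
  refine ⟨?_, ?_⟩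
  · apply le_antisymm
    · refine le_csInf (Set.nonempty_of_mem (x := _) ⟨id, measurable_id, rfl⟩) ?_
      rintro c ⟨T, hT, rfl⟩
      refine le_trans (csInf_le ⟨b, ?_⟩ ⟨T, hT, rfl⟩) ?_
      · rintro c ⟨S, -, rfl⟩
        have := hb' (μ.map S)
        have := mul_nonneg ht.le (W2sq_nonneg (μ.map S) μ)
        linarith
      · rw [W2sq_comm_le]
        have := mul_le_mul_of_nonneg_left (W2sq_le_transport μ T hT) ht.le
        linarith
    · refine le_csInf (Set.nonempty_of_mem (x := _) ⟨id, measurable_id, rfl⟩) ?_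
      rintro c ⟨T, hT, rfl⟩
      apply le_of_forall_pos_le_add
      intro ε hε
      obtain ⟨S, hS, hSm, hle⟩ := key T hT ε hε
      refine le_trans (csInf_le ⟨b, ?_⟩ ⟨S, hS, rfl⟩) ?_
      · rintro c ⟨S, -, rfl⟩
        have := hb' (μ.map S)
        have := mul_nonneg ht.le (hnn S)
        linarith
      · rw [hSm, W2sq_comm_le]
        linarith
  · intro T hT hmin
    apply le_antisymm _ (W2sq_le_transport μ T hT)
    refine le_of_mul_le_mul_left ?_ ht
    apply le_of_forall_pos_le_add
    intro ε hε
    obtain ⟨S, hS, hSm, hle⟩ := key T hT ε hε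
    have := hmin S hS
    rw [hSm] at this
    linarith
end

section
/- Let μ be an absolutely continuous Borel probability measure on Ω with μ(∂Ω) = 0, let Z be a real-valued function on the Borel probability measures on Ω that is bounded below, and let τ > 0. Then: (i) the infimum over Borel probability measures ν on Ω of Z(ν) + (1/(2τ)) W2²(ν, μ) equals the infimum over Borel measurable maps T : Ω → Ω of Z(T_♯μ) + (1/(2τ)) ∫_Ω ‖T(x) − x‖² dμ(x); (ii) if a Borel measurable map T minimizes the second problem, then ν = T_♯μ minimizes the first problem; (iii) if a Borel probability measure ν minimizes the first problem, then there exists a Borel measurable map T with T_♯μ = ν that minimizes the second problem and satisfies ∫_Ω ‖T(x) − x‖² dμ(x) = W2²(μ, ν). -/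
open MeasureTheory

open BoundedContinuousFunction Filter Topology

/-- Legendre-type conjugate over `Ω`. -/
noncomputable def cj {d : ℕ} {Ω : Set (EuclideanSpace ℝ (Fin d))}
    (ψ : Ω → ℝ) (x : EuclideanSpace ℝ (Fin d)) : ℝ :=
  ⨆ y : Ω, (inner ℝ x (y : EuclideanSpace ℝ (Fin d)) - ψ y)

section Brenier

variable {d : ℕ} {Ω : Set (EuclideanSpace ℝ (Fin d))}

theorem cj_bdd [CompactSpace Ω] {ψ : Ω → ℝ} (hψ : Continuous ψ) (x : EuclideanSpace ℝ (Fin d)) :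
    BddAbove (Set.range fun y : Ω => inner ℝ x (y : EuclideanSpace ℝ (Fin d)) - ψ y) :=
  (isCompact_range (by fun_prop)).bddAbove

theorem le_cj [CompactSpace Ω] {ψ : Ω → ℝ} (hψ : Continuous ψ) (x : EuclideanSpace ℝ (Fin d))
    (y : Ω) : inner ℝ x (y : EuclideanSpace ℝ (Fin d)) - ψ y ≤ cj ψ x :=
  le_ciSup (cj_bdd hψ x) y

theorem cj_le [Nonempty Ω] {ψ : Ω → ℝ} {x : EuclideanSpace ℝ (Fin d)} {c : ℝ}
    (h : ∀ y : Ω, inner ℝ x (y : EuclideanSpace ℝ (Fin d)) - ψ y ≤ c) : cj ψ x ≤ c :=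
  ciSup_le h

theorem cj_argmax [CompactSpace Ω] [Nonempty Ω] {ψ : Ω → ℝ} (hψ : Continuous ψ)
    (x : EuclideanSpace ℝ (Fin d)) :
    ∃ y : Ω, cj ψ x = inner ℝ x (y : EuclideanSpace ℝ (Fin d)) - ψ y := by
  have hc : Continuous fun y : Ω => inner ℝ x (y : EuclideanSpace ℝ (Fin d)) - ψ y := by fun_prop
  obtain ⟨y, -, hy⟩ := isCompact_univ.exists_isMaxOn Set.univ_nonempty hc.continuousOn
  exact ⟨y, le_antisymm (cj_le fun z => hy (Set.mem_univ z)) (le_cj hψ x y)⟩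

theorem cj_lip [CompactSpace Ω] [Nonempty Ω] {ψ : Ω → ℝ} (hψ : Continuous ψ) {R : NNReal}
    (hR : ∀ y : Ω, ‖(y : EuclideanSpace ℝ (Fin d))‖ ≤ R) : LipschitzWith R (cj ψ) := by
  refine LipschitzWith.of_le_add_mul R fun x x' => cj_le fun y => ?_
  have h1 := le_cj hψ x' y
  have h2 : inner ℝ (x - x') (y : EuclideanSpace ℝ (Fin d)) ≤ R * dist x x' := by
    refine (real_inner_le_norm _ _).trans ?_
    rw [dist_eq_norm, mul_comm]
    gcongr
    exact hR y
  rw [inner_sub_left] at h2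
  linarith

theorem cj_le_add [CompactSpace Ω] [Nonempty Ω] {ψ ψ' : Ω → ℝ} (hψ' : Continuous ψ') {c : ℝ}
    (h : ∀ y, ψ' y ≤ ψ y + c) (x : EuclideanSpace ℝ (Fin d)) : cj ψ x ≤ cj ψ' x + c :=
  cj_le fun y => by linarith [le_cj hψ' x y, h y]

/-- Dual functional. -/
noncomputable def dualJ (μ ν : Measure Ω) (ψ : Ω → ℝ) : ℝ :=
  ∫ x, cj ψ (x : EuclideanSpace ℝ (Fin d)) ∂μ + ∫ y, ψ y ∂ν

theorem intble [CompactSpace Ω] (μ : Measure Ω) [IsFiniteMeasure μ] {f : Ω → ℝ}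
    (hf : Continuous f) : Integrable f μ :=
  hf.integrable_of_hasCompactSupport (HasCompactSupport.of_compactSpace f)

theorem cj_cont [CompactSpace Ω] [Nonempty Ω] {ψ : Ω → ℝ} (hψ : Continuous ψ) :
    Continuous (cj ψ) := by
  obtain ⟨C, hC⟩ := (isCompact_range (f := fun y : Ω => ‖(y : EuclideanSpace ℝ (Fin d))‖)
    (by fun_prop)).bddAbove
  exact (cj_lip (R := C.toNNReal) hψ fun y =>
    (hC ⟨y, rfl⟩).trans (Real.le_coe_toNNReal C)).continuous

theorem cj_cont' [CompactSpace Ω] [Nonempty Ω] {ψ : Ω → ℝ} (hψ : Continuous ψ) :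
    Continuous (fun x : Ω => cj ψ (x : EuclideanSpace ℝ (Fin d))) :=
  (cj_cont hψ).comp continuous_subtype_val

theorem dualJ_le_add [CompactSpace Ω] [Nonempty Ω] (μ ν : Measure Ω) [IsProbabilityMeasure μ]
    [IsProbabilityMeasure ν] (ψ ψ' : Ω →ᵇ ℝ) :
    dualJ μ ν ψ ≤ dualJ μ ν ψ' + (2 : NNReal) * dist ψ ψ' := by
  have h (y : Ω) : |ψ y - ψ' y| ≤ dist ψ ψ' := by
    have := BoundedContinuousFunction.dist_coe_le_dist (f := ψ) (g := ψ') y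
    rwa [Real.dist_eq] at this
  have h1 : ∫ x, cj ψ (x : EuclideanSpace ℝ (Fin d)) ∂μ
      ≤ ∫ x, (cj ψ' (x : EuclideanSpace ℝ (Fin d)) + dist ψ ψ') ∂μ := by
    refine integral_mono (intble μ (cj_cont' ψ.continuous))
      (intble μ ((cj_cont' ψ'.continuous).add continuous_const)) fun x => ?_
    exact cj_le_add ψ'.continuous (fun y => by have := abs_le.1 (h y); linarith) _
  have h2 : ∫ x, ψ x ∂ν ≤ ∫ x, (ψ' x + dist ψ ψ') ∂ν := by
    refine integral_mono (intble ν ψ.continuous)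
      (intble ν (ψ'.continuous.add continuous_const)) fun x => ?_
    have := abs_le.1 (h x)
    simp only
    linarith
  rw [integral_add (intble μ (cj_cont' ψ'.continuous)) (by fun_prop)] at h1
  rw [integral_add (intble ν ψ'.continuous) (by fun_prop)] at h2
  simp only [integral_const, probReal_univ, one_smul] at h1 h2
  simp only [dualJ, NNReal.coe_ofNat]
  linarith

theorem exists_dual_min [CompactSpace Ω] [Nonempty Ω] (μ ν : Measure Ω) [IsProbabilityMeasure μ]
    [IsProbabilityMeasure ν] :
    ∃ ψ : Ω →ᵇ ℝ, ∀ ψ' : Ω →ᵇ ℝ, dualJ μ ν ψ ≤ dualJ μ ν ψ' := by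
  obtain ⟨C, hC⟩ := (isCompact_range (f := fun y : Ω => ‖(y : EuclideanSpace ℝ (Fin d))‖)
    (by fun_prop)).bddAbove
  obtain ⟨R, hR⟩ : ∃ R : NNReal, ∀ y : Ω, ‖(y : EuclideanSpace ℝ (Fin d))‖ ≤ R :=
    ⟨C.toNNReal, fun y => (hC ⟨y, rfl⟩).trans (Real.le_coe_toNNReal C)⟩
  obtain ⟨y0⟩ := ‹Nonempty Ω›
  have : Nonempty Ω := ⟨y0⟩
  let S : Set (Ω →ᵇ ℝ) := {ψ | (∀ x y, ψ x ≤ ψ y + R * dist x y) ∧ ψ y0 = 0}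
  have hS : IsCompact S := by
    refine arzela_ascoli₂ (Set.Icc (-((R : ℝ) * (2 * R))) ((R : ℝ) * (2 * R))) isCompact_Icc S ?_ ?_ ?_
    · have : S = (⋂ x : Ω, ⋂ y : Ω, {ψ : Ω →ᵇ ℝ | ψ x ≤ ψ y + R * dist x y}) ∩
        {ψ : Ω →ᵇ ℝ | ψ y0 = 0} := by
        ext ψ; simp [S]
      rw [this]
      refine IsClosed.inter (isClosed_iInter fun x => isClosed_iInter fun y => ?_) ?_
      · exact isClosed_le (continuous_eval_const x) ((continuous_eval_const y).add continuous_const)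
      · exact isClosed_eq (continuous_eval_const y0) continuous_const
    · intro f x hf
      have hd : dist x y0 ≤ 2 * R := by
        rw [Subtype.dist_eq, dist_eq_norm]
        refine (norm_sub_le _ _).trans ?_
        linarith [hR x, hR y0]
      have h1 := hf.1 x y0
      have h2 := hf.1 y0 x
      rw [dist_comm] at h2
      have h3 : (R : ℝ) * dist x y0 ≤ R * (2 * R) := by gcongr
      rw [hf.2] at h1 h2
      constructor <;> linarith
    · refine Metric.equicontinuous_of_continuity_modulus (fun t => R * t) ?_ _ ?_
      · have : Continuous fun t : ℝ => (R : ℝ) * t := by fun_prop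
        simpa using this.tendsto 0
      · rintro x y ⟨f, hf⟩
        have h1 := hf.1 x y
        have h2 := hf.1 y x
        rw [dist_comm] at h2
        rw [Real.dist_eq, abs_le]
        constructor <;> simp only <;> linarith
  have hJ : Continuous fun ψ : Ω →ᵇ ℝ => dualJ μ ν ψ :=
    (LipschitzWith.of_le_add_mul 2 fun ψ ψ' => dualJ_le_add μ ν ψ ψ').continuous
  have hne : S.Nonempty := ⟨0, by
    refine ⟨fun x y => ?_, by simp⟩
    simp only [BoundedContinuousFunction.coe_zero, Pi.zero_apply, zero_add]
    positivity⟩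
  obtain ⟨ψ, hψS, hψ⟩ := hS.exists_isMinOn hne hJ.continuousOn
  refine ⟨ψ, fun ψ' => ?_⟩
  set φ : Ω → ℝ := fun x => cj ψ' (x : EuclideanSpace ℝ (Fin d)) with hφ
  have hφc : Continuous φ := cj_cont' ψ'.continuous
  have hdc : Continuous fun x : Ω => cj φ (x : EuclideanSpace ℝ (Fin d)) := cj_cont' hφc
  set k : ℝ := cj φ (y0 : EuclideanSpace ℝ (Fin d))
  let η : Ω →ᵇ ℝ := BoundedContinuousFunction.mkOfCompact
    ⟨fun x : Ω => cj φ (x : EuclideanSpace ℝ (Fin d)) - k, hdc.sub continuous_const⟩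
  have hη (x : Ω) : η x = cj φ (x : EuclideanSpace ℝ (Fin d)) - k := rfl
  have hηS : η ∈ S := by
    refine ⟨fun x y => ?_, by simp [hη, k]⟩
    have := (cj_lip hφc hR).le_add_mul (x : EuclideanSpace ℝ (Fin d)) y
    rw [hη, hη, Subtype.dist_eq]
    linarith
  refine (hψ hηS).trans ?_
  have h1 : ∫ x, cj η (x : EuclideanSpace ℝ (Fin d)) ∂μ ≤ ∫ x, (φ x + k) ∂μ := by
    refine integral_mono (intble μ (cj_cont' η.continuous))
      (intble μ (hφc.add continuous_const)) fun x => ?_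
    refine cj_le fun y => ?_
    have := le_cj hφc (y : EuclideanSpace ℝ (Fin d)) x
    rw [hη, real_inner_comm]
    linarith
  have h2 : ∫ x, η x ∂ν ≤ ∫ x, (ψ' x - k) ∂ν := by
    refine integral_mono (intble ν η.continuous)
      (intble ν (ψ'.continuous.sub continuous_const)) fun x => ?_
    rw [hη]
    simp only
    refine sub_le_sub_right (cj_le fun y => ?_) _
    have := le_cj ψ'.continuous (y : EuclideanSpace ℝ (Fin d)) x
    rw [real_inner_comm] at this
    simp only [hφ]
    linarith
  rw [integral_add (intble μ hφc) (by fun_prop)] at h1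
  rw [integral_sub (intble ν ψ'.continuous) (by fun_prop)] at h2
  simp only [integral_const, probReal_univ, one_smul] at h1 h2
  simp only [dualJ]
  linarith

/-- At a differentiability point the maximiser is the gradient. -/
theorem argmax_eq_gradient [CompactSpace Ω] {ψ : Ω → ℝ} (hψ : Continuous ψ)
    {x : EuclideanSpace ℝ (Fin d)} (hx : DifferentiableAt ℝ (cj ψ) x) {y : Ω}
    (hy : cj ψ x = inner ℝ x (y : EuclideanSpace ℝ (Fin d)) - ψ y) :
    (y : EuclideanSpace ℝ (Fin d)) = gradient (cj ψ) x := by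
  have hmin : IsLocalMin (fun z => cj ψ z - innerSL ℝ (y : EuclideanSpace ℝ (Fin d)) z) x := by
    refine Filter.Eventually.of_forall fun z => ?_
    have := le_cj hψ z y
    simp only [innerSL_apply_apply]
    rw [real_inner_comm] at this hy
    linarith
  have h0 := hmin.hasFDerivAt_eq_zero
    (hx.hasFDerivAt.sub (innerSL ℝ (y : EuclideanSpace ℝ (Fin d))).hasFDerivAt)
  rw [sub_eq_zero] at h0
  rw [gradient, h0]
  apply (InnerProductSpace.toDual ℝ _).injective
  rw [LinearIsometryEquiv.apply_symm_apply]
  ext z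
  simp

open Classical in
/-- The transport map. -/
noncomputable def tmap (y0 : Ω) (ψ : Ω → ℝ) (x : Ω) : Ω :=
  if h : gradient (cj ψ) (x : EuclideanSpace ℝ (Fin d)) ∈ Ω then ⟨_, h⟩ else y0

theorem tmap_meas [CompactSpace Ω] (y0 : Ω) (ψ : Ω → ℝ) : Measurable (tmap y0 ψ) := by
  have hcl : IsClosed Ω := (isCompact_iff_compactSpace.2 ‹_›).isClosed
  have hg : Measurable (gradient (cj ψ)) :=
    (InnerProductSpace.toDual ℝ (EuclideanSpace ℝ (Fin d))).symm.continuous.measurable.comp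
      (measurable_fderiv ℝ (cj ψ))
  have hg' : Measurable fun x : Ω => gradient (cj ψ) (x : EuclideanSpace ℝ (Fin d)) :=
    hg.comp measurable_subtype_coe
  classical
  refine Measurable.dite (s := {x : Ω | gradient (cj ψ) (x : EuclideanSpace ℝ (Fin d)) ∈ Ω})
    (f := fun x => ⟨_, x.2⟩) (g := fun _ => y0) ?_ measurable_const (hg' hcl.measurableSet)
  exact (hg'.comp measurable_subtype_coe).subtype_mk

theorem tmap_eq [CompactSpace Ω] (y0 : Ω) {ψ : Ω → ℝ} (hψ : Continuous ψ) {x : Ω}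
    (hx : DifferentiableAt ℝ (cj ψ) (x : EuclideanSpace ℝ (Fin d))) {y : Ω}
    (hy : cj ψ (x : EuclideanSpace ℝ (Fin d)) = inner ℝ (x : EuclideanSpace ℝ (Fin d)) (y : EuclideanSpace ℝ (Fin d)) - ψ y) :
    tmap y0 ψ x = y := by
  have h := argmax_eq_gradient hψ hx hy
  have h' : gradient (cj ψ) (x : EuclideanSpace ℝ (Fin d)) ∈ Ω := h ▸ y.2
  rw [tmap, dif_pos h']
  exact Subtype.ext h.symm

theorem tmap_spec [CompactSpace Ω] (y0 : Ω) {ψ : Ω → ℝ} (hψ : Continuous ψ) {x : Ω}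
    (hx : DifferentiableAt ℝ (cj ψ) (x : EuclideanSpace ℝ (Fin d))) :
    cj ψ (x : EuclideanSpace ℝ (Fin d)) = inner ℝ (x : EuclideanSpace ℝ (Fin d)) (tmap y0 ψ x : EuclideanSpace ℝ (Fin d)) - ψ (tmap y0 ψ x) := by
  have : Nonempty Ω := ⟨y0⟩
  obtain ⟨y, hy⟩ := cj_argmax hψ (x : EuclideanSpace ℝ (Fin d))
  rw [tmap_eq y0 hψ hx hy]
  exact hy

/-- Difference quotients converge. -/
theorem quot_tendsto [CompactSpace Ω] (y0 : Ω) (ψ h : Ω →ᵇ ℝ) {x : Ω}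
    (hx : DifferentiableAt ℝ (cj ψ) (x : EuclideanSpace ℝ (Fin d)))
    (ε : ℕ → ℝ) (hε : ∀ n, 0 < ε n) (hε0 : Tendsto ε atTop (𝓝 0)) :
    Tendsto (fun n => (cj (fun y => ψ y + ε n * h y) (x : EuclideanSpace ℝ (Fin d)) - cj ψ (x : EuclideanSpace ℝ (Fin d))) / ε n)
      atTop (𝓝 (- h (tmap y0 ψ x))) := by
  have : Nonempty Ω := ⟨y0⟩
  have hc (n : ℕ) : Continuous fun y => ψ y + ε n * h y := by fun_prop
  choose y hy using fun n => cj_argmax (hc n) (x : EuclideanSpace ℝ (Fin d))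
  have hyT : Tendsto y atTop (𝓝 (tmap y0 ψ x)) := by
    refine isCompact_univ.tendsto_nhds_of_unique_mapClusterPt (Eventually.of_forall fun _ => Set.mem_univ _) ?_
    intro z _ hz
    refine (tmap_eq y0 ψ.continuous hx (le_antisymm (cj_le fun w => ?_)
      (le_cj ψ.continuous _ z))).symm
    obtain ⟨s, hs, hsz⟩ := MapClusterPt.tendsto_subseq hz
    have hεs : Tendsto (fun n => ε (s n)) atTop (𝓝 0) := hε0.comp hs.tendsto_atTop
    have hl : Tendsto (fun n => inner ℝ (x : EuclideanSpace ℝ (Fin d)) (w : EuclideanSpace ℝ (Fin d)) - (ψ w + ε (s n) * h w)) atTop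
        (𝓝 (inner ℝ (x : EuclideanSpace ℝ (Fin d)) (w : EuclideanSpace ℝ (Fin d)) - (ψ w + 0 * h w))) :=
      tendsto_const_nhds.sub (tendsto_const_nhds.add (hεs.mul_const _))
    have hr : Tendsto (fun n => inner ℝ (x : EuclideanSpace ℝ (Fin d)) (y (s n) : EuclideanSpace ℝ (Fin d)) - (ψ (y (s n)) + ε (s n) * h (y (s n)))) atTop
        (𝓝 (inner ℝ (x : EuclideanSpace ℝ (Fin d)) (z : EuclideanSpace ℝ (Fin d)) - (ψ z + 0 * h z))) := by
      have c1 : Continuous fun w : Ω => inner ℝ (x : EuclideanSpace ℝ (Fin d)) (w : EuclideanSpace ℝ (Fin d)) := by fun_prop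
      exact ((c1.tendsto z).comp hsz).sub (((ψ.continuous.tendsto z).comp hsz).add
        (hεs.mul ((h.continuous.tendsto z).comp hsz)))
    have := le_of_tendsto_of_tendsto' hl hr fun n => by
      rw [← hy (s n)]
      exact le_cj (hc (s n)) _ w
    simpa using this
  have hup : Tendsto (fun n => - h (y n)) atTop (𝓝 (- h (tmap y0 ψ x))) :=
    ((h.continuous.tendsto _).comp hyT).neg
  refine tendsto_of_tendsto_of_tendsto_of_le_of_le tendsto_const_nhds hup (fun n => ?_) fun n => ?_
  · simp only
    rw [le_div_iff₀ (hε n), tmap_spec y0 ψ.continuous hx]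
    have := le_cj (hc n) (x : EuclideanSpace ℝ (Fin d)) (tmap y0 ψ x)
    linarith
  · simp only
    rw [div_le_iff₀ (hε n), hy n]
    have := le_cj ψ.continuous (x : EuclideanSpace ℝ (Fin d)) (y n)
    linarith

theorem variation_le [CompactSpace Ω] (y0 : Ω) (μ ν : Measure Ω) [IsProbabilityMeasure μ]
    [IsProbabilityMeasure ν] (ψ : Ω →ᵇ ℝ) (hψ : ∀ ψ' : Ω →ᵇ ℝ, dualJ μ ν ψ ≤ dualJ μ ν ψ')
    (hd : ∀ᵐ x : Ω ∂μ, DifferentiableAt ℝ (cj ψ) (x : EuclideanSpace ℝ (Fin d))) (h : Ω →ᵇ ℝ) :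
    ∫ x, h (tmap y0 ψ x) ∂μ ≤ ∫ y, h y ∂ν := by
  have : Nonempty Ω := ⟨y0⟩
  let ε : ℕ → ℝ := fun n => 1 / ((n : ℝ) + 1)
  have hε (n : ℕ) : 0 < ε n := by positivity
  have hε0 : Tendsto ε atTop (𝓝 0) := tendsto_one_div_add_atTop_nhds_zero_nat
  have hc (n : ℕ) : Continuous fun y => ψ y + ε n * h y := by fun_prop
  let q : ℕ → Ω → ℝ := fun n x =>
    (cj (fun y => ψ y + ε n * h y) (x : EuclideanSpace ℝ (Fin d)) - cj ψ (x : EuclideanSpace ℝ (Fin d))) / ε n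
  have hqc (n : ℕ) : Continuous (q n) :=
    ((cj_cont' (hc n)).sub (cj_cont' ψ.continuous)).div_const _
  have hlim : Tendsto (fun n => ∫ x, q n x ∂μ) atTop (𝓝 (∫ x, - h (tmap y0 ψ x) ∂μ)) := by
    refine tendsto_integral_of_dominated_convergence (fun _ => ‖h‖)
      (fun n => (hqc n).aestronglyMeasurable) (by fun_prop) (fun n => ?_) ?_
    · refine Eventually.of_forall fun x => ?_
      have hb (y : Ω) : |h y| ≤ ‖h‖ := h.norm_coe_le_norm y
      have hb' (y : Ω) : |ε n * h y| ≤ ‖h‖ * ε n := by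
        rw [abs_mul, abs_of_pos (hε n), mul_comm]
        exact mul_le_mul_of_nonneg_right (hb y) (hε n).le
      have e1 := cj_le_add (ψ := fun y => ψ y + ε n * h y) (c := ‖h‖ * ε n) ψ.continuous
        (fun y => by have := abs_le.1 (hb' y); linarith) (x : EuclideanSpace ℝ (Fin d))
      have e2 := cj_le_add (ψ' := fun y => ψ y + ε n * h y) (ψ := ψ) (c := ‖h‖ * ε n) (hc n)
        (fun y => by have := abs_le.1 (hb' y); linarith) (x : EuclideanSpace ℝ (Fin d))
      rw [Real.norm_eq_abs, abs_div, abs_of_pos (hε n), div_le_iff₀ (hε n), abs_le]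
      constructor <;> linarith
    · filter_upwards [hd] with x hx
      exact quot_tendsto y0 ψ h hx ε hε hε0
  have hge (n : ℕ) : - ∫ y, h y ∂ν ≤ ∫ x, q n x ∂μ := by
    have h1 := hψ (ψ + ε n • h)
    have e : (⇑(ψ + ε n • h) : Ω → ℝ) = fun y => ψ y + ε n * h y := by
      ext y; simp
    rw [e] at h1
    simp only [dualJ] at h1
    rw [integral_add (intble ν ψ.continuous) (intble ν (by fun_prop)), integral_const_mul] at h1
    simp only [q]
    rw [integral_div, integral_sub (intble μ (cj_cont' (hc n))) (intble μ (cj_cont' ψ.continuous)),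
      le_div_iff₀ (hε n)]
    linarith
  have := ge_of_tendsto' hlim hge
  rw [integral_neg] at this
  linarith

theorem brenier (hcomp : IsCompact Ω) (μ ν : Measure Ω) [IsProbabilityMeasure μ]
    [IsProbabilityMeasure ν]
    (hac : μ.map (Subtype.val : Ω → EuclideanSpace ℝ (Fin d)) ≪ volume) :
    ∃ T : Ω → Ω, Measurable T ∧ μ.map T = ν ∧
      ∀ γ : Measure (Ω × Ω), IsProbabilityMeasure γ → γ.map Prod.fst = μ → γ.map Prod.snd = ν →
        transportCost T μ ≤ ∫ p, ‖(p.1 : EuclideanSpace ℝ (Fin d))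
          - (p.2 : EuclideanSpace ℝ (Fin d))‖ ^ 2 ∂γ := by
  have : CompactSpace Ω := isCompact_iff_compactSpace.1 hcomp
  have : Nonempty Ω := nonempty_of_isProbabilityMeasure μ
  obtain ⟨y0⟩ := ‹Nonempty Ω›
  have : Nonempty Ω := ⟨y0⟩
  obtain ⟨ψ, hψ⟩ := exists_dual_min μ ν
  obtain ⟨C, hC⟩ := (isCompact_range (f := fun y : Ω => ‖(y : EuclideanSpace ℝ (Fin d))‖)
    (by fun_prop)).bddAbove
  have hlip : LipschitzWith C.toNNReal (cj ψ) := cj_lip ψ.continuous fun y =>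
    (hC ⟨y, rfl⟩).trans (Real.le_coe_toNNReal C)
  have hd : ∀ᵐ x : Ω ∂μ, DifferentiableAt ℝ (cj ψ) (x : EuclideanSpace ℝ (Fin d)) :=
    ae_of_ae_map measurable_subtype_coe.aemeasurable
      (hac.ae_le (hlip.ae_differentiableAt (μ := volume)))
  have hTm := tmap_meas y0 (ψ : Ω → ℝ)
  have : IsProbabilityMeasure (μ.map (tmap y0 (ψ : Ω → ℝ))) :=
    Measure.isProbabilityMeasure_map hTm.aemeasurable
  have hmap : μ.map (tmap y0 ψ) = ν := by
    refine ext_of_forall_integral_eq_of_IsFiniteMeasure fun h => ?_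
    rw [integral_map hTm.aemeasurable h.continuous.aestronglyMeasurable]
    refine le_antisymm (variation_le y0 μ ν ψ hψ hd h) ?_
    have := variation_le y0 μ ν ψ hψ hd (-h)
    simp only [BoundedContinuousFunction.coe_neg, Pi.neg_apply, integral_neg] at this
    linarith
  refine ⟨tmap y0 ψ, hTm, hmap, fun γ hγ h1 h2 => ?_⟩
  let a : Ω → ℝ := fun x => ‖(x : EuclideanSpace ℝ (Fin d))‖ ^ 2 - 2 * cj ψ (x : EuclideanSpace ℝ (Fin d))
  let b : Ω → ℝ := fun x => ‖(x : EuclideanSpace ℝ (Fin d))‖ ^ 2 - 2 * ψ x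
  have hac : Continuous a := by
    have := cj_cont' ψ.continuous
    fun_prop
  have hbc : Continuous b := by fun_prop
  have e1 : transportCost (tmap y0 ψ) μ = ∫ x, a x ∂μ + ∫ y, b y ∂ν := by
    rw [← hmap, integral_map hTm.aemeasurable hbc.aestronglyMeasurable, transportCost,
      ← integral_add (intble μ hac)
        (show Integrable (fun x => b (tmap y0 ψ x)) μ from
          (intble (μ.map (tmap y0 ψ)) hbc).comp_measurable hTm)]
    refine integral_congr_ae ?_
    filter_upwards [hd] with x hx
    have := tmap_spec y0 ψ.continuous hx
    simp only [a, b]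
    rw [norm_sub_sq_real, this, real_inner_comm]
    ring
  have e2 : ∫ x, a x ∂μ + ∫ y, b y ∂ν = ∫ p : Ω × Ω, (a p.1 + b p.2) ∂γ := by
    rw [integral_add]
    · rw [← h1, ← h2, integral_map measurable_fst.aemeasurable hac.aestronglyMeasurable,
        integral_map measurable_snd.aemeasurable hbc.aestronglyMeasurable]
    · exact (hac.comp continuous_fst).integrable_of_hasCompactSupport
        (HasCompactSupport.of_compactSpace _)
    · exact (hbc.comp continuous_snd).integrable_of_hasCompactSupport
        (HasCompactSupport.of_compactSpace _)
  rw [e1, e2]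
  refine integral_mono ?_ ?_ fun p => ?_
  · exact Continuous.integrable_of_hasCompactSupport (by fun_prop)
        (HasCompactSupport.of_compactSpace _)
  · exact Continuous.integrable_of_hasCompactSupport (by fun_prop)
        (HasCompactSupport.of_compactSpace _)
  · have := le_cj ψ.continuous (p.1 : EuclideanSpace ℝ (Fin d)) p.2
    simp only [a, b]
    rw [norm_sub_sq_real]
    linarith

theorem W2_bdd (α β : Measure Ω) : BddBelow { c : ℝ | ∃ γ : Measure (Ω × Ω),
    IsProbabilityMeasure γ ∧ γ.map Prod.fst = α ∧ γ.map Prod.snd = β ∧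
    c = ∫ p, ‖(p.1 : EuclideanSpace ℝ (Fin d)) - (p.2 : EuclideanSpace ℝ (Fin d))‖ ^ 2 ∂γ } := by
  refine ⟨0, ?_⟩
  rintro c ⟨γ, -, -, -, rfl⟩
  positivity

theorem W2_nonneg (α β : Measure Ω) : 0 ≤ W2sq α β := by
  refine Real.sInf_nonneg ?_
  rintro c ⟨γ, -, -, -, rfl⟩
  positivity

theorem W2_symm (α β : Measure Ω) : W2sq α β = W2sq β α := by
  have key (α β : Measure Ω) (c : ℝ) (h : ∃ γ : Measure (Ω × Ω),
      IsProbabilityMeasure γ ∧ γ.map Prod.fst = α ∧ γ.map Prod.snd = β ∧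
      c = ∫ p, ‖(p.1 : EuclideanSpace ℝ (Fin d)) - (p.2 : EuclideanSpace ℝ (Fin d))‖ ^ 2 ∂γ) :
      ∃ γ : Measure (Ω × Ω),
      IsProbabilityMeasure γ ∧ γ.map Prod.fst = β ∧ γ.map Prod.snd = α ∧
      c = ∫ p, ‖(p.1 : EuclideanSpace ℝ (Fin d)) - (p.2 : EuclideanSpace ℝ (Fin d))‖ ^ 2 ∂γ := by
    obtain ⟨γ, hγ, h1, h2, rfl⟩ := h
    refine ⟨γ.map Prod.swap, Measure.isProbabilityMeasure_map measurable_swap.aemeasurable,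
      ?_, ?_, ?_⟩
    · rw [Measure.map_map measurable_fst measurable_swap]; exact h2
    · rw [Measure.map_map measurable_snd measurable_swap]; exact h1
    · rw [integral_map measurable_swap.aemeasurable
        (Continuous.aestronglyMeasurable (by fun_prop))]
      simp only [Prod.fst_swap, Prod.snd_swap]
      exact integral_congr_ae (Eventually.of_forall fun p => by simp only [norm_sub_rev])
  unfold W2sq
  congr 1
  ext c
  exact ⟨key α β c, key β α c⟩

theorem W2_le_cost (μ : Measure Ω) [IsProbabilityMeasure μ] {T : Ω → Ω} (hT : Measurable T) :
    W2sq (μ.map T) μ ≤ transportCost T μ := by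
  have hm : Measurable fun x => (T x, x) := hT.prodMk measurable_id
  refine csInf_le (W2_bdd _ _) ⟨μ.map fun x => (T x, x),
    Measure.isProbabilityMeasure_map hm.aemeasurable, ?_, ?_, ?_⟩
  · rw [Measure.map_map measurable_fst hm]; rfl
  · rw [Measure.map_map measurable_snd hm]; exact Measure.map_id
  · rw [integral_map hm.aemeasurable (Continuous.aestronglyMeasurable (by fun_prop))]
    rfl

theorem brenier' (hcomp : IsCompact Ω) (μ ν : Measure Ω) [IsProbabilityMeasure μ]
    [IsProbabilityMeasure ν]
    (hac : μ.map (Subtype.val : Ω → EuclideanSpace ℝ (Fin d)) ≪ volume) :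
    ∃ T : Ω → Ω, Measurable T ∧ μ.map T = ν ∧ transportCost T μ = W2sq ν μ := by
  obtain ⟨T, hT, hm, hopt⟩ := brenier hcomp μ ν hac
  refine ⟨T, hT, hm, le_antisymm ?_ (by rw [← hm]; exact W2_le_cost μ hT)⟩
  rw [W2_symm]
  refine le_csInf ⟨_, μ.prod ν, inferInstance, by simp, by simp, rfl⟩ ?_
  rintro c ⟨γ, hγ, h1, h2, rfl⟩
  exact hopt γ hγ h1 h2

end Brenier

theorem stmt2 {d : ℕ} (hd : 1 ≤ d) (Ω : Set (EuclideanSpace ℝ (Fin d)))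
    (hconv : Convex ℝ Ω) (hcomp : IsCompact Ω)
    (hfront : volume (frontier Ω) = 0)
    (μ : Measure Ω) (hμ : IsProbabilityMeasure μ)
    (hac : μ.map (Subtype.val : Ω → EuclideanSpace ℝ (Fin d)) ≪ volume)
    (hμfront : μ.map (Subtype.val : Ω → EuclideanSpace ℝ (Fin d)) (frontier Ω) = 0)
    (Z : Measure Ω → ℝ) (hZ : BddBelow (Set.range Z))
    (τ : ℝ) (hτ : 0 < τ) :
    -- (i) the two infima coincide
    (sInf { c : ℝ | ∃ ν : Measure Ω, IsProbabilityMeasure ν ∧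
        c = Z ν + (1 / (2 * τ)) * W2sq ν μ }
      = sInf { c : ℝ | ∃ T : Ω → Ω, Measurable T ∧
        c = Z (μ.map T) + (1 / (2 * τ)) * transportCost T μ })
    -- (ii) a minimizing map yields a minimizing measure
    ∧ (∀ T : Ω → Ω, Measurable T →
        (∀ S : Ω → Ω, Measurable S →
          Z (μ.map T) + (1 / (2 * τ)) * transportCost T μ
            ≤ Z (μ.map S) + (1 / (2 * τ)) * transportCost S μ) →
        ∀ ν' : Measure Ω, IsProbabilityMeasure ν' →
          Z (μ.map T) + (1 / (2 * τ)) * W2sq (μ.map T) μ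
            ≤ Z ν' + (1 / (2 * τ)) * W2sq ν' μ)
    -- (iii) a minimizing measure is induced by a minimizing optimal transport map
    ∧ (∀ ν : Measure Ω, IsProbabilityMeasure ν →
        (∀ ν' : Measure Ω, IsProbabilityMeasure ν' →
          Z ν + (1 / (2 * τ)) * W2sq ν μ ≤ Z ν' + (1 / (2 * τ)) * W2sq ν' μ) →
        ∃ T : Ω → Ω, Measurable T ∧ μ.map T = ν ∧
          (∀ S : Ω → Ω, Measurable S →
            Z (μ.map T) + (1 / (2 * τ)) * transportCost T μ
              ≤ Z (μ.map S) + (1 / (2 * τ)) * transportCost S μ) ∧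
          transportCost T μ = W2sq μ ν) := by
  have hk : 0 < 1 / (2 * τ) := by positivity
  have hB (ν : Measure Ω) (hν : IsProbabilityMeasure ν) := brenier' hcomp μ ν hac
  have hL (T : Ω → Ω) (hT : Measurable T) : Z (μ.map T) + (1 / (2 * τ)) * W2sq (μ.map T) μ
      ≤ Z (μ.map T) + (1 / (2 * τ)) * transportCost T μ := by
    have := mul_le_mul_of_nonneg_left (W2_le_cost μ hT) hk.le
    linarith
  have hP (T : Ω → Ω) (hT : Measurable T) : IsProbabilityMeasure (μ.map T) :=
    Measure.isProbabilityMeasure_map hT.aemeasurable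
  obtain ⟨m, hm⟩ := hZ
  refine ⟨le_antisymm ?_ ?_, ?_, ?_⟩
  · refine le_csInf ⟨_, id, measurable_id, rfl⟩ ?_
    rintro c ⟨T, hT, rfl⟩
    refine le_trans ?_ (hL T hT)
    refine csInf_le ⟨m, ?_⟩ ⟨μ.map T, hP T hT, rfl⟩
    rintro c ⟨ν, -, rfl⟩
    have := mul_nonneg hk.le (W2_nonneg ν μ)
    have := hm (Set.mem_range_self ν)
    linarith
  · refine le_csInf ⟨_, μ, hμ, rfl⟩ ?_
    rintro c ⟨ν, hν, rfl⟩
    obtain ⟨T, hT, hTν, hc⟩ := hB ν hν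
    refine csInf_le ⟨m, ?_⟩ ⟨T, hT, by rw [hTν, hc]⟩
    rintro c ⟨S, hS, rfl⟩
    have := mul_nonneg hk.le ((W2_nonneg _ _).trans (W2_le_cost μ hS))
    have := hm (Set.mem_range_self (μ.map S))
    linarith
  · intro T hT hmin ν' hν'
    obtain ⟨S, hS, hSν, hc⟩ := hB ν' hν'
    have := hmin S hS
    rw [hSν, hc] at this
    exact (hL T hT).trans this
  · intro ν hν hmin
    obtain ⟨T, hT, hTν, hc⟩ := hB ν hν
    refine ⟨T, hT, hTν, fun S hS => ?_, by rw [hc, W2_symm]⟩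
    rw [hTν, hc]
    exact (hmin _ (hP S hS)).trans (hL S hS)
end
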